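/- If t ∈ (0,1) is irrational, then C_t has Lebesgue measure zero. -/

import Mathlib

open Filter Topology MeasureTheory

/-- The digit set `Ω_t = {0, 3t, 3, 3t+3}`. -/
def Omega (t : ℝ) : Set ℝ := {0, 3*t, 3, 3*t+3}

/-- The projection `C_t` of the four corner Cantor set:
the set of sums `∑_{i≥1} d_i 4^{-i}` with all digits `d_i ∈ Ω_t`. -/
noncomputable def cornerC (t : ℝ) : Set ℝ :=
  {x | ∃ d : ℕ → ℝ, (∀ i, d i ∈ Omega t) ∧ x = ∑' i : ℕ, d i / 4^(i+1)}

/-!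
Suppose `T = C_t` has positive measure. Since `4 T = T + Ω_t` and `Ω_t` has at most four elements,
the four translates of `T` are a.e. disjoint and `T` has an interior point: otherwise boundedly
many translates of `T` meet any unit ball, so that `4 ^ n T` has holes of a fixed size in every
unit ball, and rescaling them contradicts Lebesgue's density theorem.

Write `χ_S` for the indicator of `S`, let the group algebra `ℤ[ℝ]` act on functions by
translation, and put `a = 3t`, `b = 3`, `P_a(n) = ∏ i < n, (1 + X ^ (4 ^ i a))`. Iterating
`4 T = T + Ω_t` at the scale `4 ^ (-m)` gives
`χ_{4 ^ n T} = P_{a / 4 ^ m}(m + n) P_{b / 4 ^ m}(m + n) χ_{4 ^ (-m) T}` a.e. Both factors become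
geometric sums when multiplied by the complementary products with `2a`, `2b` in place of `a`, `b`.
Hence a certain `B_m ∈ ℤ[ℝ]` with exponents of size `O(1)` and coefficient sum zero satisfies
`B_m χ_{4 ^ n T} = q χ_{4 ^ (-m) T}`, where `q = (1 - X ^ a) (1 - X ^ b) P_a(n) P_b(n)` does not
depend on `m`. The left side vanishes deep inside `4 ^ n T`, and letting `m → ∞` the coefficients
of `q` vanish there. But `q = (1 - X ^ (2a)) (1 - X ^ (2b)) P_{4a}(n - 1) P_{4b}(n - 1)`, where by
irrationality nothing cancels, so every exponent of `P_{4a}(n - 1) P_{4b}(n - 1)` is one of `q`;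
and these exponents come within bounded distance of every point deep inside `4 ^ n T`.
-/

open scoped Pointwise

section AEDisjoint

variable {α ι : Type*} [MeasurableSpace α] {μ : Measure α} {I : Finset ι} {s : ι → Set α}

theorem pairwise_aedisjoint_of_sum_measure_le (hs : ∀ i ∈ I, MeasurableSet (s i))
    (hfin : ∀ i ∈ I, μ (s i) ≠ ⊤) (hle : ∑ i ∈ I, μ (s i) ≤ μ (⋃ i ∈ I, s i)) :
    (I : Set ι).Pairwise (Function.onFun (AEDisjoint μ) s) := by
  classical
  intro i hi j hj hij
  let J := (I.erase i).erase j
  have hsplit : ∑ k ∈ I, μ (s k) = μ (s i) + μ (s j) + ∑ k ∈ J, μ (s k) := by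
    rw [← Finset.add_sum_erase I _ hi,
      ← Finset.add_sum_erase (I.erase i) _ (Finset.mem_erase.2 ⟨hij.symm, hj⟩), add_assoc]
  have hcover : (⋃ k ∈ I, s k) ⊆ (s i ∪ s j) ∪ ⋃ k ∈ J, s k := by
    intro x hx
    simp only [Set.mem_iUnion, Set.mem_union, J, Finset.mem_erase] at hx ⊢
    grind
  have hJ : ∑ k ∈ J, μ (s k) ≠ ⊤ :=
    ENNReal.sum_ne_top.2 fun k hk => hfin k (Finset.mem_of_mem_erase (Finset.mem_of_mem_erase hk))
  have hpair : μ (s i) + μ (s j) ≤ μ (s i ∪ s j) := by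
    refine (ENNReal.add_le_add_iff_right hJ).1 ?_
    calc μ (s i) + μ (s j) + ∑ k ∈ J, μ (s k) = ∑ k ∈ I, μ (s k) := hsplit.symm
      _ ≤ μ (⋃ k ∈ I, s k) := hle
      _ ≤ μ (s i ∪ s j) + μ (⋃ k ∈ J, s k) := (measure_mono hcover).trans (measure_union_le _ _)
      _ ≤ μ (s i ∪ s j) + ∑ k ∈ J, μ (s k) := by gcongr; exact measure_biUnion_finset_le J s
  rw [← measure_union_add_inter (s i) (hs j hj)] at hpair
  have hunion : μ (s i ∪ s j) ≠ ⊤ := measure_union_ne_top (hfin i hi) (hfin j hj)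
  exact le_zero_iff.1 ((ENNReal.add_le_add_iff_left hunion).1 (by simpa using hpair))

theorem indicator_biUnion_ae_eq_sum {M : Type*} [AddCommMonoid M]
    (hs : (I : Set ι).Pairwise (Function.onFun (AEDisjoint μ) s)) (f : α → M) :
    (⋃ i ∈ I, s i).indicator f =ᵐ[μ] fun x => ∑ i ∈ I, (s i).indicator f x := by
  have hdisj : ∀ᵐ x ∂μ, ∀ i ∈ I, ∀ j ∈ I, i ≠ j → x ∈ s i → x ∉ s j := by
    refine (Finset.eventually_all I).2 fun i hi => (Finset.eventually_all I).2 fun j hj => ?_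
    by_cases hij : i = j
    · exact .of_forall fun x h => absurd hij h
    · filter_upwards [measure_eq_zero_iff_ae_notMem.1 (hs hi hj hij)] with x hx _ hxi hxj
      exact hx ⟨hxi, hxj⟩
  filter_upwards [hdisj] with x hx
  by_cases hmem : ∃ i ∈ I, x ∈ s i
  · obtain ⟨i, hi, hxi⟩ := hmem
    have hother : ∀ j ∈ I, j ≠ i → (s j).indicator f x = 0 := fun j hj hji =>
      Set.indicator_of_notMem (hx i hi j hj hji.symm hxi) f
    rw [Finset.sum_eq_single_of_mem i hi hother, Set.indicator_of_mem hxi,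
      Set.indicator_of_mem (Set.mem_iUnion₂.2 ⟨i, hi, hxi⟩)]
  · push Not at hmem
    rw [Set.indicator_of_notMem (by simpa using hmem),
      Finset.sum_eq_zero fun i hi => Set.indicator_of_notMem (hmem i hi) f]

end AEDisjoint

section Holes

variable {E : Type*} [NormedAddCommGroup E] {T : Set E}

theorem exists_ball_subset_ball_sdiff (hT : IsClosed T) (hint : interior T = ∅) (y : E) {r : ℝ}
    (hr : 0 < r) : ∃ ρ > 0, ∃ z, Metric.ball z ρ ⊆ Metric.ball y r \ T := by
  have hne : (Metric.ball y r \ T).Nonempty := by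
    rw [Set.sdiff_nonempty]
    intro hsub
    have hy := interior_maximal hsub Metric.isOpen_ball (Metric.mem_ball_self hr)
    simp [hint] at hy
  obtain ⟨z, hz⟩ := hne
  obtain ⟨ρ, hρ, hball⟩ := Metric.isOpen_iff.1 (Metric.isOpen_ball.sdiff hT) z hz
  exact ⟨ρ, hρ, z, hball⟩

variable [ProperSpace E]

theorem exists_uniform_hole (hT : IsCompact T) (hint : interior T = ∅) {r : ℝ} (hr : 0 < r) :
    ∃ ρ > 0, ∀ x, ∃ z, Metric.ball z ρ ⊆ Metric.ball x r \ T := by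
  have hnear : ∃ ρ > 0, ∀ x ∈ Metric.cthickening r T,
      ∃ z, Metric.ball z ρ ⊆ Metric.ball x r \ T := by
    refine hT.cthickening.induction_on
      (p := fun S => ∃ ρ > 0, ∀ x ∈ S, ∃ z, Metric.ball z ρ ⊆ Metric.ball x r \ T)
      ⟨1, one_pos, by simp⟩ ?_ ?_ ?_
    · rintro S S' hSS' ⟨ρ, hρ, h⟩
      exact ⟨ρ, hρ, fun x hx => h x (hSS' hx)⟩
    · rintro S S' ⟨ρ, hρ, h⟩ ⟨ρ', hρ', h'⟩
      refine ⟨min ρ ρ', lt_min hρ hρ', fun x hx => hx.elim (fun hx => ?_) fun hx => ?_⟩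
      · exact (h x hx).imp fun z hz => (Metric.ball_subset_ball (min_le_left _ _)).trans hz
      · exact (h' x hx).imp fun z hz => (Metric.ball_subset_ball (min_le_right _ _)).trans hz
    · intro y _
      obtain ⟨ρ, hρ, z, hz⟩ := exists_ball_subset_ball_sdiff hT.isClosed hint y (half_pos hr)
      refine ⟨Metric.ball y (r / 2), mem_nhdsWithin_of_mem_nhds
        (Metric.ball_mem_nhds y (half_pos hr)), ρ, hρ, fun x hx => ⟨z, hz.trans ?_⟩⟩
      refine Set.sdiff_subset_sdiff_left (Metric.ball_subset_ball' ?_)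
      rw [Metric.mem_ball, dist_comm] at hx
      linarith
  obtain ⟨ρ, hρ, h⟩ := hnear
  refine ⟨min ρ r, lt_min hρ hr, fun x => ?_⟩
  by_cases hx : x ∈ Metric.cthickening r T
  · exact (h x hx).imp fun z hz => (Metric.ball_subset_ball (min_le_left _ _)).trans hz
  · refine ⟨x, fun y hy => ?_⟩
    have hyx : y ∈ Metric.ball x r := Metric.ball_subset_ball (min_le_right ρ r) hy
    exact ⟨hyx, fun hyT => hx
      (Metric.mem_cthickening_of_dist_le x y r T hyT (Metric.mem_ball'.1 hyx).le)⟩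

theorem exists_uniform_hole_add_finset (hT : IsCompact T) (hint : interior T = ∅) (N : ℕ)
    {r : ℝ} (hr : 0 < r) :
    ∃ ρ > 0, ∀ F : Finset E, F.card ≤ N →
      ∀ x, ∃ z, Metric.ball z ρ ⊆ Metric.ball x r \ ((F : Set E) + T) := by
  classical
  induction N with
  | zero =>
    refine ⟨r, hr, fun F hF x => ⟨x, ?_⟩⟩
    simp [Finset.card_eq_zero.1 (Nat.le_zero.1 hF)]
  | succ N ih =>
    obtain ⟨ρ, hρ, hhole⟩ := ih
    obtain ⟨σ, hσ, hhole'⟩ := exists_uniform_hole hT hint hρ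
    refine ⟨min ρ σ, lt_min hρ hσ, fun F hF x => ?_⟩
    rcases F.eq_empty_or_nonempty with rfl | ⟨d, hd⟩
    · obtain ⟨z, hz⟩ := hhole ∅ (by simp) x
      exact ⟨z, (Metric.ball_subset_ball (min_le_left _ _)).trans hz⟩
    · obtain ⟨z, hz⟩ := hhole (F.erase d) (by rw [Finset.card_erase_of_mem hd]; omega) x
      obtain ⟨w, hw⟩ := hhole' (z - d)
      refine ⟨w + d, fun y hy => ?_⟩
      have hyw : y - d ∈ Metric.ball w σ := by
        rw [mem_ball_iff_norm, sub_sub, add_comm d, ← mem_ball_iff_norm]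
        exact Metric.ball_subset_ball (min_le_right ρ σ) hy
      obtain ⟨hyz, hyT⟩ := hw hyw
      rw [mem_ball_iff_norm, sub_sub_sub_cancel_right, ← mem_ball_iff_norm] at hyz
      refine ⟨(hz hyz).1, ?_⟩
      rintro ⟨e, he, τ, hτ, rfl⟩
      by_cases hed : e = d
      · exact hyT (by simpa [hed] using hτ)
      · exact (hz hyz).2 (Set.add_mem_add (Finset.mem_erase.2 ⟨hed, he⟩) hτ)

end Holes

section Porosity

theorem measure_eq_zero_of_porous {α : Type*} [PseudoMetricSpace α] [MeasurableSpace α]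
    [SecondCountableTopology α] [BorelSpace α] (μ : Measure α) [IsLocallyFiniteMeasure μ]
    [IsUnifLocDoublingMeasure μ] {S : Set α} (hS : MeasurableSet S) {K : ℝ} {δ : ℕ → ℝ}
    (hδ : Tendsto δ atTop (𝓝[>] 0))
    (hpor : ∀ x ∈ S, ∀ n, ∃ w, x ∈ Metric.closedBall w (K * δ n) ∧
      Disjoint S (Metric.closedBall w (δ n))) : μ S = 0 := by
  rw [← Measure.restrict_eq_zero, ← ae_eq_bot, ← empty_mem_iff_bot]
  filter_upwards [IsUnifLocDoublingMeasure.ae_tendsto_measure_inter_div μ S K,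
    ae_restrict_mem hS] with x hdensity hx
  choose w hxw hdisj using hpor x hx
  have hone := hdensity w δ hδ (.of_forall hxw)
  simp only [(hdisj _).inter_eq, measure_empty, ENNReal.zero_div] at hone
  exact absurd (tendsto_nhds_unique hone tendsto_const_nhds) one_ne_zero

end Porosity

section SelfReplicating

open Module (finrank)

theorem exists_finset_pow_smul_eq_add {M A : Type*} [Monoid M] [AddCommMonoid A]
    [DistribMulAction M A] {T : Set A} {D : Finset A} {r : M}
    (hrepl : r • T = (D : Set A) + T) (n : ℕ) :
    ∃ F : Finset A, F.card ≤ D.card ^ n ∧ r ^ n • T = (F : Set A) + T := by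
  classical
  induction n with
  | zero => exact ⟨{0}, by simp, by simp⟩
  | succ n ih =>
    obtain ⟨F, hcard, hF⟩ := ih
    refine ⟨r • F + D, ?_, ?_⟩
    · calc (r • F + D).card ≤ (r • F).card * D.card := Finset.card_add_le
        _ ≤ D.card ^ n * D.card := by gcongr; exact Finset.card_image_le.trans hcard
        _ = D.card ^ (n + 1) := (pow_succ _ _).symm
    · rw [pow_succ', mul_smul, hF, smul_add, hrepl, Finset.coe_add, Finset.coe_smul_finset,
        add_assoc]

theorem exists_card_le_of_pairwise_aedisjoint_vadd {E : Type*} [NormedAddCommGroup E]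
    [ProperSpace E] [MeasurableSpace E] [BorelSpace E] (μ : Measure E) [μ.IsAddLeftInvariant]
    [IsFiniteMeasureOnCompacts μ] {T : Set E} (hT : IsCompact T) (hpos : μ T ≠ 0) (r : ℝ) :
    ∃ N : ℕ, ∀ (F : Finset E) (y : E),
      (F : Set E).Pairwise (Function.onFun (AEDisjoint μ) (· +ᵥ T)) →
      (∀ d ∈ F, ¬Disjoint (d +ᵥ T) (Metric.ball y r)) → F.card ≤ N := by
  obtain ⟨R, hR⟩ := hT.isBounded.subset_closedBall 0
  let B := Metric.closedBall (0 : E) (r + 2 * R)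
  obtain ⟨N, hN⟩ := ENNReal.exists_nat_gt
    (ENNReal.div_ne_top (measure_closedBall_lt_top (μ := μ)).ne hpos : μ B / μ T ≠ ⊤)
  refine ⟨N, fun F y hdisj hmeet => ?_⟩
  have hsub : (⋃ d ∈ F, (d +ᵥ T)) ⊆ y +ᵥ B := by
    refine Set.iUnion₂_subset fun d hd => ?_
    obtain ⟨_, ⟨u, hu, rfl⟩, hball⟩ := Set.not_disjoint_iff.1 (hmeet d hd)
    rintro _ ⟨τ, hτ, rfl⟩
    have huR := mem_closedBall_zero_iff.1 (hR hu)
    have hτR := mem_closedBall_zero_iff.1 (hR hτ)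
    have hdu : ‖d + u - y‖ < r := mem_ball_iff_norm.1 hball
    rw [Set.mem_vadd_set_iff_neg_vadd_mem, mem_closedBall_zero_iff]
    calc ‖-y +ᵥ (d +ᵥ τ)‖ = ‖(d + u - y) + (τ - u)‖ := by
          congr 1; simp only [vadd_eq_add]; abel
      _ ≤ ‖d + u - y‖ + (‖τ‖ + ‖u‖) := (norm_add_le _ _).trans (by gcongr; exact norm_sub_le _ _)
      _ ≤ r + 2 * R := by linarith
  have hmass : (F.card : ENNReal) * μ T ≤ μ B :=
    calc (F.card : ENNReal) * μ T = μ (⋃ d ∈ F, (d +ᵥ T)) := by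
          rw [measure_biUnion_finset₀ hdisj fun d _ =>
            (hT.vadd d).isClosed.measurableSet.nullMeasurableSet]
          simp
      _ ≤ μ B := (measure_mono hsub).trans_eq (measure_vadd μ y B)
  have hlt : (F.card : ENNReal) < N :=
    ((ENNReal.le_div_iff_mul_le (.inl hpos) (.inl hT.measure_ne_top)).2 hmass).trans_lt hN
  exact_mod_cast hlt.le

variable {E : Type*} [NormedAddCommGroup E] [NormedSpace ℝ E] [FiniteDimensional ℝ E]
  [MeasurableSpace E] [BorelSpace E] (μ : Measure E) [μ.IsAddHaarMeasure] {T : Set E}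

theorem pairwise_aedisjoint_of_smul_eq_iUnion {ι : Type*} {I : Finset ι} {v : ι → E} {r : ℝ}
    (hT : IsCompact T) (hcard : (I.card : ℝ) ≤ |r ^ finrank ℝ E|)
    (hrepl : r • T = ⋃ i ∈ I, (v i +ᵥ T)) :
    (I : Set ι).Pairwise (Function.onFun (AEDisjoint μ) fun i => v i +ᵥ T) := by
  refine pairwise_aedisjoint_of_sum_measure_le
    (fun i _ => (hT.vadd (v i)).isClosed.measurableSet)
    (fun i _ => (hT.vadd (v i)).measure_ne_top) ?_
  simp only [measure_vadd, Finset.sum_const, nsmul_eq_mul]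
  rw [← hrepl, Measure.addHaar_smul]
  gcongr
  rw [← ENNReal.ofReal_natCast]
  exact ENNReal.ofReal_le_ofReal hcard

theorem exists_uniform_hole_pow_smul {D : Finset E} {r : ℝ} (hT : IsCompact T)
    (hcard : (D.card : ℝ) ≤ |r| ^ finrank ℝ E) (hrepl : r • T = (D : Set E) + T)
    (hpos : μ T ≠ 0) (hint : interior T = ∅) :
    ∃ ρ > 0, ∀ (n : ℕ) (y : E), ∃ z, Metric.ball z ρ ⊆ Metric.ball y 1 \ r ^ n • T := by
  classical
  obtain ⟨N, hN⟩ := exists_card_le_of_pairwise_aedisjoint_vadd μ hT hpos 1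
  obtain ⟨ρ, hρ, hhole⟩ := exists_uniform_hole_add_finset hT hint N one_pos
  refine ⟨ρ, hρ, fun n y => ?_⟩
  obtain ⟨F, hFcard, hF⟩ := exists_finset_pow_smul_eq_add hrepl n
  have hFcard' : (F.card : ℝ) ≤ |(r ^ n) ^ finrank ℝ E| := by
    calc (F.card : ℝ) ≤ (D.card : ℝ) ^ n := by exact_mod_cast hFcard
      _ ≤ (|r| ^ finrank ℝ E) ^ n := by gcongr
      _ = |(r ^ n) ^ finrank ℝ E| := by rw [abs_pow, abs_pow, pow_right_comm]
  have hdisj : (F : Set E).Pairwise (Function.onFun (AEDisjoint μ) (· +ᵥ T)) :=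
    pairwise_aedisjoint_of_smul_eq_iUnion μ hT hFcard'
      (hF.trans (Set.iUnion_vadd_set (F : Set E) T).symm)
  let G := {d ∈ F | ¬Disjoint (d +ᵥ T) (Metric.ball y 1)}
  have hG : G.card ≤ N := hN G y (hdisj.mono (Finset.filter_subset _ F))
    fun d hd => (Finset.mem_filter.1 hd).2
  obtain ⟨z, hz⟩ := hhole G hG y
  refine ⟨z, fun x hx => ⟨(hz hx).1, ?_⟩⟩
  rw [hF]
  rintro ⟨d, hd, τ, hτ, rfl⟩
  have hmeet : ¬Disjoint (d +ᵥ T) (Metric.ball y 1) :=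
    Set.not_disjoint_iff.2 ⟨d + τ, Set.vadd_mem_vadd_set hτ, (hz hx).1⟩
  exact (hz hx).2 (Set.add_mem_add (Finset.mem_filter.2 ⟨hd, hmeet⟩) hτ)

theorem interior_nonempty_of_smul_eq_add {D : Finset E} {r : ℝ} (hT : IsCompact T) (hr : 1 < r)
    (hcard : (D.card : ℝ) ≤ r ^ finrank ℝ E) (hrepl : r • T = (D : Set E) + T)
    (hpos : μ T ≠ 0) : (interior T).Nonempty := by
  by_contra hint
  rw [Set.not_nonempty_iff_eq_empty] at hint
  have hr0 : 0 < r := one_pos.trans hr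
  obtain ⟨ρ, hρ, hhole⟩ :=
    exists_uniform_hole_pow_smul μ hT (by rwa [abs_of_pos hr0]) hrepl hpos hint
  let δ : ℕ → ℝ := fun n => (r⁻¹) ^ n * (ρ / 2)
  have hδ : Tendsto δ atTop (𝓝[>] 0) := by
    refine tendsto_nhdsWithin_iff.2 ⟨?_, .of_forall fun n => Set.mem_Ioi.2 (by positivity)⟩
    simpa only [zero_mul] using (tendsto_pow_atTop_nhds_zero_of_lt_one (inv_nonneg.2 hr0.le)
      (inv_lt_one_of_one_lt₀ hr)).mul_const (ρ / 2)
  refine hpos (measure_eq_zero_of_porous μ hT.isClosed.measurableSet (K := 2 / ρ) hδ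
    fun x _ n => ?_)
  obtain ⟨z, hz⟩ := hhole n (r ^ n • x)
  have hrn : 0 < r ^ n := by positivity
  have hdist (y : E) : dist y ((r ^ n)⁻¹ • z) = (r⁻¹) ^ n * dist (r ^ n • y) z := by
    rw [inv_pow, ← Real.norm_of_nonneg (inv_nonneg.2 hrn.le), ← dist_smul₀,
      inv_smul_smul₀ hrn.ne', Real.norm_of_nonneg (inv_nonneg.2 hrn.le)]
  refine ⟨(r ^ n)⁻¹ • z, ?_, Set.disjoint_left.2 fun y hyT hy => ?_⟩
  · have hzx : dist z (r ^ n • x) < 1 := (hz (Metric.mem_ball_self hρ)).1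
    rw [Metric.mem_closedBall, hdist, dist_comm]
    calc (r⁻¹) ^ n * dist z (r ^ n • x) ≤ (r⁻¹) ^ n * 1 := by gcongr
      _ = 2 / ρ * δ n := by simp only [δ]; field_simp
  · rw [Metric.mem_closedBall, hdist] at hy
    have hyz : dist (r ^ n • y) z ≤ ρ / 2 := le_of_mul_le_mul_left hy (by positivity)
    exact (hz (Metric.mem_ball.2 (by linarith))).2 (Set.smul_mem_smul_set hyT)

end SelfReplicating

section Convolution

open AddMonoidAlgebra (single)

variable {k G : Type*} [CommRing k] [AddCommGroup G]

/-- The group algebra `k[G]` acting on functions `G → k` by translation: the basis element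
`single a 1` sends `f` to `x ↦ f (x - a)`. -/
noncomputable def convolve : AddMonoidAlgebra k G →ₐ[k] Module.End k (G → k) :=
  AddMonoidAlgebra.lift k (Module.End k (G → k)) G
    { toFun a := LinearMap.funLeft k k (· - a.toAdd)
      map_one' := by ext; simp [LinearMap.funLeft]
      map_mul' a b := by ext f x; simp [LinearMap.funLeft, sub_sub] }

theorem convolve_apply (p : AddMonoidAlgebra k G) (f : G → k) (x : G) :
    convolve p f x = ∑ a ∈ p.coeff.support, p.coeff a * f (x - a) := by
  simp [convolve, AddMonoidAlgebra.lift_apply, Finsupp.sum, LinearMap.funLeft]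

theorem convolve_single_apply (a : G) (c : k) (f : G → k) (x : G) :
    convolve (single a c) f x = c * f (x - a) := by
  simp [convolve, LinearMap.funLeft]

theorem convolve_mul_apply (p q : AddMonoidAlgebra k G) (f : G → k) :
    convolve (p * q) f = convolve p (convolve q f) := by
  rw [map_mul, Module.End.mul_apply]

theorem convolve_congr {p : AddMonoidAlgebra k G} {f g : G → k} {x : G}
    (h : ∀ a ∈ p.coeff.support, f (x - a) = g (x - a)) : convolve p f x = convolve p g x := by
  rw [convolve_apply, convolve_apply]
  exact Finset.sum_congr rfl fun a ha => by rw [h a ha]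

theorem convolve_indicator_one_apply {q : AddMonoidAlgebra k G} {S : Set G} {p x : G}
    (hp : x - p ∈ S) (hq : ∀ s ∈ q.coeff.support, x - s ∈ S → s = p) :
    convolve q (S.indicator 1) x = q.coeff p := by
  rw [convolve_apply, Finset.sum_eq_single p]
  · rw [Set.indicator_of_mem hp, Pi.one_apply, mul_one]
  · intro s hs hsp
    rw [Set.indicator_of_notMem fun hmem => hsp (hq s hs hmem), mul_zero]
  · intro hps
    rw [Finsupp.notMem_support_iff.1 hps, zero_mul]

theorem convolve_congr_ae [MeasurableSpace G] [MeasurableAdd G] {μ : Measure G}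
    [μ.IsAddRightInvariant] (p : AddMonoidAlgebra k G) {f g : G → k} (h : f =ᵐ[μ] g) :
    convolve p f =ᵐ[μ] convolve p g := by
  have hall : ∀ᵐ x ∂μ, ∀ a ∈ p.coeff.support, f (x - a) = g (x - a) := by
    refine (Finset.eventually_all _).2 fun a _ => ?_
    simp only [sub_eq_add_neg]
    exact (measurePreserving_add_right μ (-a)).quasiMeasurePreserving.ae h
  filter_upwards [hall] with x hx using convolve_congr hx

theorem convolve_mul_one_sub_single_one (p : AddMonoidAlgebra k G) (a : G) :
    convolve (p * (1 - single a 1)) (1 : G → k) = 0 := by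
  have hdiff : convolve (1 - single a 1) (1 : G → k) = 0 := by
    ext x
    simp [map_sub, convolve_single_apply]
  rw [convolve_mul_apply, hdiff, map_zero]

end Convolution

section Mask

open AddMonoidAlgebra (single)

variable (k : Type*) {G : Type*} [CommRing k] [AddCommGroup G]

/-- The polynomial `∏ i < n, (1 + X ^ (4 ^ i • a))` of the group algebra `k[G]`: its exponents
are the multiples `j • a` for which `j < 4 ^ n` has only the digits `0` and `1` in base four. -/
noncomputable def mask (a : G) (n : ℕ) : AddMonoidAlgebra k G :=
  ∏ i ∈ Finset.range n, (1 + single (4 ^ i • a) 1)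

theorem mask_add (a : G) (m n : ℕ) : mask k a (m + n) = mask k a m * mask k (4 ^ m • a) n := by
  simp only [mask, Finset.prod_range_add, smul_smul, pow_add, mul_comm]

theorem mask_succ (a : G) (n : ℕ) :
    mask k a (n + 1) = (1 + single a 1) * mask k (4 • a) n := by
  rw [add_comm n, mask_add]
  simp [mask]

theorem one_sub_single_mul_one_add_single (a : G) :
    (1 - single a 1) * (1 + single a 1) = (1 - single (2 • a) 1 : AddMonoidAlgebra k G) := by
  have hsq : single a 1 * single a 1 = (single (2 • a) 1 : AddMonoidAlgebra k G) := by
    rw [AddMonoidAlgebra.single_mul_single, mul_one, two_nsmul]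
  rw [← hsq]
  ring

/-- Every `j < 4 ^ n` is uniquely `j₁ + 2 * j₂` with base four digits `0` and `1`, so the two
masks multiply to a geometric sum. -/
theorem one_sub_single_mul_mask_mul_mask (a : G) (n : ℕ) :
    (1 - single a 1) * (mask k a n * mask k (2 • a) n) = 1 - single (4 ^ n • a) 1 := by
  induction n generalizing a with
  | zero => simp [mask]
  | succ n ih =>
    calc (1 - single a 1) * (mask k a (n + 1) * mask k (2 • a) (n + 1))
        = (1 - single a 1) * (1 + single a 1) * (1 + single (2 • a) 1) *
            (mask k (4 • a) n * mask k (2 • 4 • a) n) := by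
          rw [mask_succ, mask_succ, smul_comm 4 2 a]; ring
      _ = 1 - single (4 ^ (n + 1) • a) 1 := by
          rw [one_sub_single_mul_one_add_single, one_sub_single_mul_one_add_single, smul_smul,
            show 2 * 2 = 4 by rfl, ih, smul_smul, pow_succ]

variable {k}

theorem exists_eq_nsmul_of_mem_support_mask {a x : G} {n : ℕ}
    (hx : x ∈ (mask k a n).coeff.support) : ∃ j < 4 ^ n, x = j • a := by
  classical
  induction n generalizing x with
  | zero =>
    rw [mask, Finset.prod_range_zero] at hx
    exact ⟨0, by simp, by simpa using AddMonoidAlgebra.support_coeff_one_subset hx⟩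
  | succ n ih =>
    rw [mask, Finset.prod_range_succ, ← mask, mul_add, mul_one] at hx
    rcases Finset.mem_union.1 (Finsupp.support_add hx) with hx | hx
    · obtain ⟨j, hj, rfl⟩ := ih hx
      exact ⟨j, by rw [pow_succ]; omega, rfl⟩
    · have hmem : x - 4 ^ n • a ∈ (mask k a n).coeff.support := by
        rw [Finsupp.mem_support_iff] at hx ⊢
        simpa [AddMonoidAlgebra.coeff_mul_single_apply, sub_eq_add_neg] using hx
      obtain ⟨j, hj, hja⟩ := ih hmem
      exact ⟨j + 4 ^ n, by rw [pow_succ]; omega, by rw [add_nsmul, ← hja, sub_add_cancel]⟩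

/-- The difference operator `(1 - X ^ a) * (1 - X ^ b)` of the group algebra `k[G]`, whose action
by `convolve` takes mixed differences in the directions `a` and `b`. -/
noncomputable def mixedDiff (k : Type*) {G : Type*} [CommRing k] [AddCommGroup G] (a b : G) :
    AddMonoidAlgebra k G :=
  (1 - single a 1) * (1 - single b 1)

theorem mixedDiff_mul_coeff_apply (a b : G) (p : AddMonoidAlgebra k G) (x : G) :
    (mixedDiff k a b * p).coeff x =
      p.coeff x - p.coeff (x - a) - p.coeff (x - b) + p.coeff (x - (a + b)) := by
  have hexpand : mixedDiff k a b * p =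
      p - single a 1 * p - single b 1 * p + single (a + b) 1 * p := by
    rw [mixedDiff, ← mul_one (1 : k), ← AddMonoidAlgebra.single_mul_single, mul_one]
    ring
  rw [hexpand]
  simp [AddMonoidAlgebra.coeff_single_mul_apply, sub_eq_neg_add]

theorem mixedDiff_mul_mask_mul_mask (a b : G) (n : ℕ) :
    mixedDiff k a b * (mask k a n * mask k b n) * (mask k (2 • a) n * mask k (2 • b) n) =
      mixedDiff k (4 ^ n • a) (4 ^ n • b) := by
  rw [mixedDiff, mixedDiff, ← one_sub_single_mul_mask_mul_mask k a,
    ← one_sub_single_mul_mask_mul_mask k b]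
  ring

theorem mixedDiff_mul_mask_succ (a b : G) (n : ℕ) :
    mixedDiff k a b * (mask k a (n + 1) * mask k b (n + 1)) =
      mixedDiff k (2 • a) (2 • b) * (mask k (4 • a) n * mask k (4 • b) n) := by
  rw [mixedDiff, mixedDiff, mask_succ, mask_succ, ← one_sub_single_mul_one_add_single k a,
    ← one_sub_single_mul_one_add_single k b]
  ring

theorem exists_eq_add_of_mem_support_mul_mask {a b x : G} {n : ℕ}
    (hx : x ∈ (mask k a n * mask k b n).coeff.support) : ∃ i j : ℕ, x = i • a + j • b := by
  classical
  obtain ⟨y, hy, z, hz, rfl⟩ :=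
    Finset.mem_add.1 (AddMonoidAlgebra.support_coeff_mul_subset _ _ hx)
  obtain ⟨i, -, rfl⟩ := exists_eq_nsmul_of_mem_support_mask hy
  obtain ⟨j, -, rfl⟩ := exists_eq_nsmul_of_mem_support_mask hz
  exact ⟨i, j, rfl⟩

/-- The exponents of the masks lie in `4 ℤa + 4 ℤb`, so the four translates by
`0, 2a, 2b, 2a + 2b` making up the product do not overlap. -/
theorem mixedDiff_mul_mask_coeff_ne_zero {a b x : G} (hab : LinearIndependent ℤ ![a, b]) {n : ℕ}
    (hx : x ∈ (mask k (4 • a) n * mask k (4 • b) n).coeff.support) :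
    (mixedDiff k (2 • a) (2 • b) * (mask k (4 • a) n * mask k (4 • b) n)).coeff x ≠ 0 := by
  set Q := mask k (4 • a) n * mask k (4 • b) n
  obtain ⟨i, j, rfl⟩ := exists_eq_add_of_mem_support_mul_mask hx
  have hzero (u v : ℤ) (huv : u % 4 = 2 ∨ v % 4 = 2) :
      Q.coeff (i • 4 • a + j • 4 • b - (u • a + v • b)) = 0 := by
    by_contra hne
    obtain ⟨i', j', heq⟩ := exists_eq_add_of_mem_support_mul_mask (Finsupp.mem_support_iff.2 hne)
    have hrel : (4 * i - u - 4 * i' : ℤ) • a + (4 * j - v - 4 * j' : ℤ) • b = 0 := by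
      rw [← sub_eq_zero] at heq
      rw [← heq]
      module
    have hcoeffs := LinearIndependent.pair_iff.1 hab _ _ hrel
    omega
  have h₁ := hzero 2 0 (by norm_num)
  have h₂ := hzero 0 2 (by norm_num)
  have h₃ := hzero 2 2 (by norm_num)
  simp only [zero_smul, add_zero, zero_add, ofNat_zsmul] at h₁ h₂ h₃
  rw [mixedDiff_mul_coeff_apply, h₁, h₂, h₃]
  simpa using hx

end Mask

section Support

open AddMonoidAlgebra (single)

variable {k E : Type*} [CommRing k] [NormedAddCommGroup E]

theorem norm_le_of_mem_support_mul {p q : AddMonoidAlgebra k E} {r s : ℝ}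
    (hp : ∀ x ∈ p.coeff.support, ‖x‖ ≤ r) (hq : ∀ x ∈ q.coeff.support, ‖x‖ ≤ s) :
    ∀ x ∈ (p * q).coeff.support, ‖x‖ ≤ r + s := by
  classical
  intro x hx
  obtain ⟨y, hy, z, hz, rfl⟩ :=
    Finset.mem_add.1 (AddMonoidAlgebra.support_coeff_mul_subset _ _ hx)
  exact (norm_add_le y z).trans (add_le_add (hp y hy) (hq z hz))

theorem norm_le_of_mem_support_one_sub_single {a : E} :
    ∀ x ∈ (1 - single a 1 : AddMonoidAlgebra k E).coeff.support, ‖x‖ ≤ ‖a‖ := by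
  classical
  intro x hx
  rcases Finset.mem_union.1 (Finsupp.support_sub hx) with hx | hx
  · have hx0 : x = 0 := by simpa using AddMonoidAlgebra.support_coeff_one_subset hx
    simp [hx0]
  · have hxa : x = a := by simpa using Finsupp.support_single_subset hx
    rw [hxa]

theorem norm_le_of_mem_support_mask [NormedSpace ℝ E] {a : E} {n : ℕ} :
    ∀ x ∈ (mask k a n).coeff.support, ‖x‖ ≤ ‖4 ^ n • a‖ := by
  intro x hx
  obtain ⟨j, hj, rfl⟩ := exists_eq_nsmul_of_mem_support_mask hx
  rw [RCLike.norm_nsmul ℝ, RCLike.norm_nsmul ℝ]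
  exact nsmul_le_nsmul_left (norm_nonneg a) hj.le

theorem norm_le_of_mem_support_mixedDiff_mul_mask [NormedSpace ℝ E] {a b : E} {n : ℕ} :
    ∀ x ∈ (mixedDiff k a b * (mask k (2 • a) n * mask k (2 • b) n)).coeff.support,
      ‖x‖ ≤ 3 * (‖4 ^ n • a‖ + ‖4 ^ n • b‖) := by
  intro x hx
  have hle (v : E) : ‖v‖ ≤ ‖4 ^ n • v‖ := by
    rw [RCLike.norm_nsmul ℝ]
    exact le_self_nsmul (norm_nonneg v) (by positivity)
  have htwo (v : E) : ‖4 ^ n • 2 • v‖ = 2 * ‖4 ^ n • v‖ := by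
    rw [smul_comm, RCLike.norm_nsmul ℝ, two_nsmul, two_mul]
  have hbound := norm_le_of_mem_support_mul
    (norm_le_of_mem_support_mul norm_le_of_mem_support_one_sub_single
      norm_le_of_mem_support_one_sub_single)
    (norm_le_of_mem_support_mul norm_le_of_mem_support_mask norm_le_of_mem_support_mask) x hx
  rw [htwo, htwo] at hbound
  linarith [hle a, hle b]

theorem convolve_mixedDiff_mul_eq_zero {a b : E} {p : AddMonoidAlgebra k E} {r : ℝ} {f : E → k}
    {x : E} (hp : ∀ y ∈ (mixedDiff k a b * p).coeff.support, ‖y‖ ≤ r)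
    (hf : ∀ y ∈ Metric.closedBall x r, f y = 1) : convolve (mixedDiff k a b * p) f x = 0 := by
  have hone : convolve (mixedDiff k a b * p) f x = convolve (mixedDiff k a b * p) 1 x :=
    convolve_congr fun y hy => hf _ (by simpa using hp y hy)
  rw [hone, mixedDiff, mul_assoc, mul_comm, convolve_mul_one_sub_single_one, Pi.zero_apply]

theorem eventually_norm_smul_lt [NormedSpace ℝ E] {T : Set E} (hT : Bornology.IsBounded T)
    {ι : Type*} {l : Filter ι} {c : ι → ℝ} (hc : Tendsto c l (𝓝 0)) {ε : ℝ} (hε : 0 < ε) :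
    ∀ᶠ i in l, ∀ τ ∈ T, ‖c i • τ‖ < ε := by
  obtain ⟨R, hR, hTR⟩ := hT.exists_pos_norm_le
  filter_upwards [(tendsto_zero_iff_norm_tendsto_zero.1 hc).eventually_lt_const (div_pos hε hR)]
    with i hi τ hτ
  calc ‖c i • τ‖ ≤ ‖c i‖ * R := by rw [norm_smul]; gcongr; exact hTR τ hτ
    _ < ε := (lt_div_iff₀ hR).1 hi

theorem coeff_eq_zero_of_convolve_indicator_smul [NormedSpace ℝ E] [MeasurableSpace E]
    [BorelSpace E] [FiniteDimensional ℝ E] (μ : Measure E) [μ.IsAddHaarMeasure] {T : Set E}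
    (hT : Bornology.IsBounded T) (hpos : μ T ≠ 0) {ι : Type*} {l : Filter ι} [l.NeBot]
    {c : ι → ℝ} (hc : Tendsto c l (𝓝[≠] 0)) {U : Set E} (hU : IsOpen U)
    {q : AddMonoidAlgebra k E}
    (hq : ∀ i, ∀ᵐ x ∂μ, x ∈ U → convolve q ((c i • T).indicator 1) x = 0) {p : E} (hp : p ∈ U) :
    q.coeff p = 0 := by
  classical
  have hopen : IsOpen (U \ (q.coeff.support.erase p : Finset E)) :=
    hU.sdiff (Finset.finite_toSet _).isClosed
  obtain ⟨ε, hε, hball⟩ := Metric.isOpen_iff.1 hopen p ⟨hp, by simp⟩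
  obtain ⟨i, hsmall, hci⟩ : ∃ i, (∀ τ ∈ T, ‖c i • τ‖ < ε / 2) ∧ c i ≠ 0 :=
    ((eventually_norm_smul_lt hT (hc.mono_right nhdsWithin_le_nhds) (half_pos hε)).and
      (hc.eventually self_mem_nhdsWithin)).exists
  have hmass : μ (p +ᵥ c i • T) ≠ 0 := by
    rw [measure_vadd, Measure.addHaar_smul]
    simp [hci, hpos]
  obtain ⟨_, ⟨_, ⟨τ, hτ, rfl⟩, rfl⟩, hx⟩ :=
    ((frequently_ae_mem_iff.2 hmass).and_eventually (hq i)).exists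
  have hτε : ‖c i • τ‖ < ε / 2 := hsmall τ hτ
  rw [← hx (hball (by simpa using hτε.trans (half_lt_self hε))).1]
  refine (convolve_indicator_one_apply ?_ fun s hs hmem => ?_).symm
  · simpa using Set.smul_mem_smul_set hτ
  · by_contra hsp
    obtain ⟨σ, hσ, hσs⟩ := hmem
    have hdist : s - p = c i • τ - c i • σ := by
      simp only at hσs
      rw [hσs, vadd_eq_add]
      abel
    have hsε : s ∈ Metric.ball p ε := by
      rw [mem_ball_iff_norm, hdist]
      linarith [norm_sub_le (c i • τ) (c i • σ), hsmall σ hσ]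
    exact (hball hsε).2 (by simpa [hsp] using hs)

end Support

section FourCorner

open AddMonoidAlgebra (single)

/-- The self-similarity `4 S = S + {0, a, b, a + b}` of the projections of the four corner
Cantor set, where `a` and `b` are the projections of two adjacent sides of the square. -/
def IsFourCorner (a b : ℝ) (S : Set ℝ) : Prop :=
  (4 : ℝ) • S = ({0, a, b, a + b} : Set ℝ) + S

namespace IsFourCorner

variable {a b : ℝ} {S : Set ℝ}

theorem smul (h : IsFourCorner a b S) (c : ℝ) : IsFourCorner (c * a) (c * b) (c • S) := by
  have hdigits : ({0, c * a, c * b, c * a + c * b} : Set ℝ) = c • {0, a, b, a + b} := by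
    simp [← Set.image_smul, Set.image_insert_eq, mul_add]
  rw [IsFourCorner, smul_comm, h, smul_add, hdigits]

theorem indicator_four_smul_ae_eq (h : IsFourCorner a b S) (hS : IsCompact S) :
    ((4 : ℝ) • S).indicator (1 : ℝ → ℤ) =ᵐ[volume]
      convolve ((1 + single a 1) * (1 + single b 1)) (S.indicator 1) := by
  have hunion : (4 : ℝ) • S = ⋃ i ∈ Finset.univ, (![0, a, b, a + b] i +ᵥ S) := by
    rw [h]
    ext x
    simp [Set.mem_add, Set.mem_vadd_set, Fin.exists_fin_succ]
  have hdisj := pairwise_aedisjoint_of_smul_eq_iUnion volume hS (by simp) hunion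
  rw [hunion]
  filter_upwards [indicator_biUnion_ae_eq_sum hdisj (1 : ℝ → ℤ)] with x hx
  have htranslate (v : ℝ) : (v +ᵥ S).indicator (1 : ℝ → ℤ) x = S.indicator 1 (x - v) := by
    refine Set.indicator_eq_indicator ?_ rfl
    rw [Set.mem_vadd_set_iff_neg_vadd_mem, vadd_eq_add, sub_eq_neg_add]
  have hexpand : (1 + single a 1) * (1 + single b 1) =
      (single 0 1 + single a 1 + single b 1 + single (a + b) 1 : AddMonoidAlgebra ℤ ℝ) := by
    rw [← mul_one (1 : ℤ), ← AddMonoidAlgebra.single_mul_single, mul_one,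
      ← AddMonoidAlgebra.one_def]
    ring
  rw [hx, Fin.sum_univ_four, hexpand]
  simp [htranslate, convolve_single_apply]

theorem indicator_pow_smul_ae_eq (h : IsFourCorner a b S) (hS : IsCompact S) (n : ℕ) :
    ((4 : ℝ) ^ n • S).indicator (1 : ℝ → ℤ) =ᵐ[volume]
      convolve (mask ℤ a n * mask ℤ b n) (S.indicator 1) := by
  induction n generalizing a b S with
  | zero => simp [mask]
  | succ n ih =>
    have hstep := ih (h.smul 4) (hS.smul 4)
    rw [smul_smul, ← pow_succ] at hstep
    have hmask : mask ℤ a (n + 1) * mask ℤ b (n + 1) =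
        mask ℤ (4 * a) n * mask ℤ (4 * b) n * ((1 + single a 1) * (1 + single b 1)) := by
      simp only [mask_succ, nsmul_eq_mul, Nat.cast_ofNat]
      ring
    rw [hmask, convolve_mul_apply]
    exact hstep.trans (convolve_congr_ae _ (h.indicator_four_smul_ae_eq hS))

theorem convolve_mixedDiff_ae_eq (h : IsFourCorner a b S) (hS : IsCompact S) (m n : ℕ) :
    convolve (mixedDiff ℤ (4 ^ m • a) (4 ^ m • b) *
        (mask ℤ (4 ^ m • a) n * mask ℤ (4 ^ m • b) n)) (S.indicator 1) =ᵐ[volume]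
      convolve (mixedDiff ℤ a b * (mask ℤ (2 • a) m * mask ℤ (2 • b) m))
        (((4 : ℝ) ^ (m + n) • S).indicator 1) := by
  have hmask : mixedDiff ℤ (4 ^ m • a) (4 ^ m • b) *
        (mask ℤ (4 ^ m • a) n * mask ℤ (4 ^ m • b) n) =
      mixedDiff ℤ a b * (mask ℤ (2 • a) m * mask ℤ (2 • b) m) *
        (mask ℤ a (m + n) * mask ℤ b (m + n)) := by
    rw [← mixedDiff_mul_mask_mul_mask, mask_add, mask_add]
    ring
  rw [hmask, convolve_mul_apply]
  exact convolve_congr_ae _ (h.indicator_pow_smul_ae_eq hS (m + n)).symm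

theorem coeff_mixedDiff_mul_mask_eq_zero (h : IsFourCorner a b S) (hS : IsCompact S)
    (hpos : volume S ≠ 0) {n : ℕ} {x r : ℝ} (hball : Metric.ball x r ⊆ (4 : ℝ) ^ n • S)
    {p : ℝ} (hp : dist p x + 3 * (|a| + |b|) < r) :
    (mixedDiff ℤ a b * (mask ℤ a n * mask ℤ b n)).coeff p = 0 := by
  have hc : Tendsto (fun m : ℕ => ((4 : ℝ) ^ m)⁻¹) atTop (𝓝[≠] 0) := by
    refine tendsto_nhdsWithin_iff.2 ⟨?_, .of_forall fun m => by simp⟩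
    exact tendsto_inv_atTop_zero.comp (tendsto_pow_atTop_atTop_of_one_lt (by norm_num))
  refine coeff_eq_zero_of_convolve_indicator_smul volume hS.isBounded hpos hc
    (Metric.isOpen_ball (x := x) (ε := r - 3 * (|a| + |b|))) (fun m => ?_)
    (by rw [Metric.mem_ball]; linarith)
  have hscale (v : ℝ) : 4 ^ m • (((4 : ℝ) ^ m)⁻¹ * v) = v := by simp
  have hpow : (4 : ℝ) ^ (m + n) • ((4 : ℝ) ^ m)⁻¹ • S = (4 : ℝ) ^ n • S := by
    rw [smul_smul, pow_add]
    congr 1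
    field_simp
  have hident := (h.smul ((4 : ℝ) ^ m)⁻¹).convolve_mixedDiff_ae_eq (hS.smul _) m n
  rw [hscale, hscale, hpow] at hident
  filter_upwards [hident] with y hy hyx
  rw [hy]
  refine convolve_mixedDiff_mul_eq_zero norm_le_of_mem_support_mixedDiff_mul_mask fun z hz => ?_
  rw [hscale, hscale, Real.norm_eq_abs, Real.norm_eq_abs, Metric.mem_closedBall] at hz
  rw [Metric.mem_ball] at hyx
  exact Set.indicator_of_mem (hball (Metric.mem_ball.2 (by linarith [dist_triangle z y x]))) _

theorem exists_mem_support_mask_dist_le (h : IsFourCorner a b S) (hS : IsCompact S) :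
    ∃ R, ∀ (n : ℕ) (x : ℝ), Metric.ball x 1 ⊆ (4 : ℝ) ^ n • S →
      ∃ p ∈ (mask ℤ a n * mask ℤ b n).coeff.support, dist p x ≤ R := by
  obtain ⟨R, hR⟩ := hS.isBounded.subset_closedBall 0
  refine ⟨R + 1, fun n x hball => ?_⟩
  have hmass : volume (Metric.ball x 1) ≠ 0 := (Metric.measure_ball_pos volume x one_pos).ne'
  obtain ⟨y, hyx, hy⟩ := ((frequently_ae_mem_iff.2 hmass).and_eventually
    (h.indicator_pow_smul_ae_eq hS n)).exists
  rw [Set.indicator_of_mem (hball hyx), Pi.one_apply, convolve_apply] at hy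
  obtain ⟨p, hp, hne⟩ := Finset.exists_ne_zero_of_sum_ne_zero (hy.symm.trans_ne one_ne_zero)
  have hpy : ‖y - p‖ ≤ R := mem_closedBall_zero_iff.1
    (hR (Set.mem_of_indicator_ne_zero (right_ne_zero_of_mul hne)))
  refine ⟨p, hp, (dist_triangle p y x).trans (add_le_add ?_ (Metric.mem_ball.1 hyx).le)⟩
  rwa [dist_comm, dist_eq_norm]

theorem interior_nonempty (h : IsFourCorner a b S) (hS : IsCompact S) (hpos : volume S ≠ 0) :
    (interior S).Nonempty := by
  have hcard : (({0, a, b, a + b} : Finset ℝ).card : ℝ) ≤ 4 ^ Module.finrank ℝ ℝ := by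
    rw [Module.finrank_self, pow_one]
    exact_mod_cast Finset.card_le_four
  exact interior_nonempty_of_smul_eq_add volume hS (by norm_num) hcard
    (h.trans (by push_cast; rfl)) hpos

theorem volume_eq_zero (h : IsFourCorner a b S) (hS : IsCompact S)
    (hab : LinearIndependent ℤ ![a, b]) : volume S = 0 := by
  by_contra hpos
  obtain ⟨c, hc⟩ := h.interior_nonempty hS hpos
  obtain ⟨ε, hε, hball⟩ := Metric.isOpen_iff.1 isOpen_interior c hc
  obtain ⟨R, hR⟩ := (h.smul 4).exists_mem_support_mask_dist_le (hS.smul 4)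
  obtain ⟨n, hn⟩ := pow_unbounded_of_one_lt ((|R| + 1 + 3 * (|a| + |b|)) / ε)
    (by norm_num : (1 : ℝ) < 4)
  have hlarge : Metric.ball ((4 : ℝ) ^ (n + 1) • c) (4 ^ (n + 1) * ε) ⊆ (4 : ℝ) ^ (n + 1) • S := by
    have hsmul := smul_ball (pow_ne_zero (n + 1) four_ne_zero : (4 : ℝ) ^ (n + 1) ≠ 0) c ε
    rw [norm_pow, Real.norm_ofNat] at hsmul
    rw [← hsmul]
    exact Set.smul_set_mono (hball.trans interior_subset)
  have hradius : |R| + 1 + 3 * (|a| + |b|) < 4 ^ (n + 1) * ε := by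
    rw [div_lt_iff₀ hε] at hn
    rw [pow_succ]
    nlinarith [pow_pos (by norm_num : (0 : ℝ) < 4) n]
  obtain ⟨p, hp, hpdist⟩ := hR n ((4 : ℝ) ^ (n + 1) • c) <| by
    rw [smul_smul, ← pow_succ]
    exact (Metric.ball_subset_ball
      (by linarith [abs_nonneg R, abs_nonneg a, abs_nonneg b])).trans hlarge
  have hcoeff := h.coeff_mixedDiff_mul_mask_eq_zero hS hpos hlarge (p := p)
    (by linarith [le_abs_self R])
  rw [mixedDiff_mul_mask_succ] at hcoeff
  exact mixedDiff_mul_mask_coeff_ne_zero hab (by simpa using hp) hcoeff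

end IsFourCorner

end FourCorner

section DigitSums

/-- The set of sums `∑_{i≥1} d_i r^{-i}` with all digits `d_i` in `D`; the digit `d_i` is the term
of index `i - 1` of a sequence. -/
noncomputable def digitSums (r : ℝ) (D : Set ℝ) : Set ℝ :=
  {x | ∃ d : ℕ → ℝ, (∀ i, d i ∈ D) ∧ x = ∑' i : ℕ, d i / r ^ (i + 1)}

variable {r : ℝ} {D : Set ℝ}

theorem summable_const_div_pow_succ (hr : 1 < r) (C : ℝ) :
    Summable fun i : ℕ => C / r ^ (i + 1) := by
  have hgeom := summable_geometric_of_lt_one (inv_nonneg.2 (one_pos.trans hr).le)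
    (inv_lt_one_of_one_lt₀ hr)
  simpa only [inv_pow, div_eq_mul_inv] using ((summable_nat_add_iff 1).2 hgeom).mul_left C

theorem norm_digit_div_pow_le (hr : 1 < r) {C x : ℝ} (hx : ‖x‖ ≤ C) (i : ℕ) :
    ‖x / r ^ (i + 1)‖ ≤ C / r ^ (i + 1) := by
  have hr0 : 0 < r := one_pos.trans hr
  rw [norm_div, norm_pow, Real.norm_of_nonneg hr0.le]
  gcongr

theorem isCompact_digitSums (hr : 1 < r) (hD : IsCompact D) : IsCompact (digitSums r D) := by
  obtain ⟨C, hC⟩ := hD.isBounded.exists_norm_le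
  have hcont : ContinuousOn (fun d : ℕ → ℝ => ∑' i, d i / r ^ (i + 1))
      (Set.univ.pi fun _ => D) :=
    continuousOn_tsum (fun i => by fun_prop) (summable_const_div_pow_succ hr C)
      fun i d hd => norm_digit_div_pow_le hr (hC _ (hd i trivial)) i
  convert (isCompact_univ_pi fun _ => hD).image_of_continuousOn hcont using 1
  ext x
  simp [digitSums, eq_comm]

theorem tsum_digits_eq (hr : 1 < r) (hD : Bornology.IsBounded D) {d : ℕ → ℝ} (hd : ∀ i, d i ∈ D) :
    r * ∑' i, d i / r ^ (i + 1) = d 0 + ∑' i, d (i + 1) / r ^ (i + 1) := by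
  obtain ⟨C, hC⟩ := hD.exists_norm_le
  have hr0 : r ≠ 0 := (one_pos.trans hr).ne'
  have hsum : Summable fun i => d i / r ^ (i + 1) :=
    .of_norm_bounded (summable_const_div_pow_succ hr C)
      fun i => norm_digit_div_pow_le hr (hC _ (hd i)) i
  have hterm (x : ℝ) (i : ℕ) : r * (x / r ^ (i + 1)) = x / r ^ i := by
    rw [pow_succ]
    field_simp
  rw [← tsum_mul_left, (hsum.mul_left r).tsum_eq_zero_add]
  simp only [hterm, pow_zero, div_one]

theorem smul_digitSums (hr : 1 < r) (hD : Bornology.IsBounded D) :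
    r • digitSums r D = D + digitSums r D := by
  ext x
  constructor
  · rintro ⟨_, ⟨d, hd, rfl⟩, rfl⟩
    exact ⟨d 0, hd 0, _, ⟨fun i => d (i + 1), fun i => hd (i + 1), rfl⟩,
      (tsum_digits_eq hr hD hd).symm⟩
  · rintro ⟨w, hw, _, ⟨d, hd, rfl⟩, rfl⟩
    let d' : ℕ → ℝ := fun i => Nat.casesOn i w d
    have hd' : ∀ i, d' i ∈ D := fun i => Nat.casesOn i hw hd
    exact ⟨_, ⟨d', hd', rfl⟩, tsum_digits_eq hr hD hd'⟩

end DigitSums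

theorem finite_Omega (t : ℝ) : (Omega t).Finite := Set.toFinite {0, 3 * t, 3, 3 * t + 3}

theorem isCompact_cornerC (t : ℝ) : IsCompact (cornerC t) :=
  isCompact_digitSums (by norm_num) (finite_Omega t).isCompact

theorem isFourCorner_cornerC (t : ℝ) : IsFourCorner (3 * t) 3 (cornerC t) :=
  smul_digitSums (by norm_num) (finite_Omega t).isBounded

theorem linearIndependent_int_pair_of_irrational {t c : ℝ} (hc : c ≠ 0) (hirr : Irrational t) :
    LinearIndependent ℤ ![c * t, c] := by
  refine LinearIndependent.pair_iff.2 fun u v huv => ?_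
  have hrel : u * t + v = 0 := by
    refine (mul_eq_zero.1 ?_).resolve_left hc
    simp only [zsmul_eq_mul] at huv
    linear_combination huv
  have hu : u = 0 := by
    by_contra hu
    exact ((hirr.intCast_mul hu).add_intCast v).ne_zero hrel
  subst hu
  exact ⟨rfl, by simpa using hrel⟩

theorem measure_zero_of_irrational_general (t : ℝ) (hirr : Irrational t) :
    volume (cornerC t) = 0 :=
  (isFourCorner_cornerC t).volume_eq_zero (isCompact_cornerC t)
    (linearIndependent_int_pair_of_irrational three_ne_zero hirr)

theorem measure_zero_of_irrational (t : ℝ) (ht : t ∈ Set.Ioo (0:ℝ) 1)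
    (hirr : Irrational t) :
    volume (cornerC t) = 0 :=
  measure_zero_of_irrational_general t hirr
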